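/- Suppose the sequences S_n(τ), S̄_n(τ) ∈ ℂ^N, v_n(τ) ∈ ℂ, ψ_n(τ) ∈ ℂ, φ_n(τ), χ_n(τ) ∈ ℂ^N (n ∈ ℤ, τ ∈ ℝ, all differentiable in τ) satisfy, for all n and τ: (A) the spectral problem v_n(ψ_{n+1} + ψ_{n−1}) = λ ψ_n − ⟨S_n, φ_n⟩ − ⟨χ_n, S̄_n⟩, φ_{n+1} − φ_n = (i/2) S̄_n(ψ_{n+1} + ψ_{n−1}), χ_{n+1} + χ_n = (i/2) S_n(ψ_{n+1} + ψ_{n−1}); (B) the higher time evolution ψ_{n,τ} = v_n v_{n+1}(ψ_{n+2} + ψ_n) − v_n v_{n−1}(ψ_n + ψ_{n−2}) + (i/2) v_n B_n (ψ_{n+1} + ψ_{n−1}), φ_{n,τ} = (i/2) v_n v_{n+1} S̄_{n−1}(ψ_{n+2} + ψ_n) + (i/2) v_n v_{n−1} S̄_{n−2}(ψ_{n+1} + ψ_{n−1}) + (i/2) v_n v_{n−1} S̄_{n+1}(ψ_n + ψ_{n−2}) + (i/2) v_{n−1} v_{n−2} S̄_n(ψ_{n−1} + ψ_{n−3}) −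 (1/4) v_n B_n S̄_{n−1}(ψ_{n+1} + ψ_{n−1}) + (1/4) v_{n−1} B_{n−1} S̄_n(ψ_n + ψ_{n−2}), and χ_{n,τ} = (i/2) v_n v_{n+1} S_{n−1}(ψ_{n+2} + ψ_n) − (i/2) v_n v_{n−1} S_{n−2}(ψ_{n+1} + ψ_{n−1}) + (i/2) v_n v_{n−1} S_{n+1}(ψ_n + ψ_{n−2}) − (i/2) v_{n−1} v_{n−2} S_n(ψ_{n−1} + ψ_{n−3}) − (1/4) v_n B_n S_{n−1}(ψ_{n+1} + ψ_{n−1}) − (1/4) v_{n−1} B_{n−1} S_n(ψ_n + ψ_{n−2}); and suppose ψ_{n+1}(τ) + ψ_{n−1}(τ) ≠ 0 for all n and τ. Then (S, S̄, v) satisfies the higher discrete multicomponent Yajima–Oikawa system (dgvhYO): S_{n,τ} = v_n v_{n+1}(S_{n+2} + S_n) − v_n v_{n−1}(S_n + S_{n−2}) + (i/2) v_n B_n (S_{n+1} + S_{n−1}); S̄_{n,τ} = v_n v_{n+1}(S̄_{n+2} + S̄_n) − v_n v_{n−1}(S̄_n + S̄_{n−2}) − (i/2) v_n B_n (S̄_{n+1}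 + S̄_{n−1}); v_{n,τ} = 2 v_n² (v_{n+1} − v_{n−1}) + (i/2) v_n v_{n+1}(⟨S_{n+2}, S̄_n⟩ − ⟨S_n, S̄_{n+2}⟩) − (i/2) v_n v_{n−1}(⟨S_n, S̄_{n−2}⟩ − ⟨S_{n−2}, S̄_n⟩) − (1/4) v_n B_n (⟨S_{n+1}, S̄_n⟩ + ⟨S_n, S̄_{n+1}⟩ − ⟨S_n, S̄_{n−1}⟩ − ⟨S_{n−1}, S̄_n⟩). -/

import Mathlib

open Complex BigOperators

/-- Bilinear pairing on `ℂ^N` (no complex conjugation). -/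
noncomputable def pair {N : ℕ} (a b : Fin N → ℂ) : ℂ := ∑ k, a k * b k

theorem pair_add_left {N : ℕ} (a b c : Fin N → ℂ) : pair (a + b) c = pair a c + pair b c := by
  simp [pair, add_mul, Finset.sum_add_distrib]
theorem pair_add_right {N : ℕ} (a b c : Fin N → ℂ) : pair a (b + c) = pair a b + pair a c := by
  simp [pair, mul_add, Finset.sum_add_distrib]
theorem pair_sub_left {N : ℕ} (a b c : Fin N → ℂ) : pair (a - b) c = pair a c - pair b c := by
  simp [pair, sub_mul, Finset.sum_sub_distrib]
theorem pair_sub_right {N : ℕ} (a b c : Fin N → ℂ) : pair a (b - c) = pair a b - pair a c := by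
  simp [pair, mul_sub, Finset.sum_sub_distrib]
theorem pair_smul_left {N : ℕ} (r : ℂ) (a b : Fin N → ℂ) : pair (r • a) b = r * pair a b := by
  simp [pair, mul_assoc, Finset.mul_sum]
theorem pair_smul_right {N : ℕ} (r : ℂ) (a b : Fin N → ℂ) : pair a (r • b) = r * pair a b := by
  simp [pair, mul_left_comm, Finset.mul_sum]
theorem pair_hasDerivAt {N : ℕ} {a b : ℝ → Fin N → ℂ} {a' b' : Fin N → ℂ} {t : ℝ}
    (ha : HasDerivAt a a' t) (hb : HasDerivAt b b' t) :
    HasDerivAt (fun s => pair (a s) (b s)) (pair a' (b t) + pair (a t) b') t := by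
  unfold pair
  rw [← Finset.sum_add_distrib]
  exact HasDerivAt.fun_sum fun k _ => ((hasDerivAt_pi.1 ha) k).mul ((hasDerivAt_pi.1 hb) k)

theorem stmt2 {N : ℕ} (hN : 1 ≤ N)
    (S Sb : ℤ → ℝ → Fin N → ℂ) (v ψ : ℤ → ℝ → ℂ)
    (φ χ : ℤ → ℝ → Fin N → ℂ) (lam : ℂ) (B : ℤ → ℝ → ℂ)
    (hSd : ∀ n, Differentiable ℝ (S n)) (hSbd : ∀ n, Differentiable ℝ (Sb n))
    (hvd : ∀ n, Differentiable ℝ (v n)) (hψd : ∀ n, Differentiable ℝ (ψ n))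
    (hφd : ∀ n, Differentiable ℝ (φ n)) (hχd : ∀ n, Differentiable ℝ (χ n))
    (hB : ∀ (n : ℤ) (τ : ℝ), B n τ
      = pair (S (n+1) τ) (Sb n τ) + pair (S n τ) (Sb (n+1) τ)
        + pair (S n τ) (Sb (n-1) τ) + pair (S (n-1) τ) (Sb n τ))
    (hL1 : ∀ (n : ℤ) (τ : ℝ), v n τ * (ψ (n+1) τ + ψ (n-1) τ)
      = lam * ψ n τ - pair (S n τ) (φ n τ) - pair (χ n τ) (Sb n τ))
    (hL2 : ∀ (n : ℤ) (τ : ℝ), φ (n+1) τ - φ n τ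
      = ((Complex.I/2) * (ψ (n+1) τ + ψ (n-1) τ)) • Sb n τ)
    (hL3 : ∀ (n : ℤ) (τ : ℝ), χ (n+1) τ + χ n τ
      = ((Complex.I/2) * (ψ (n+1) τ + ψ (n-1) τ)) • S n τ)
    (hM1 : ∀ (n : ℤ) (τ : ℝ), deriv (ψ n) τ
      = v n τ * v (n+1) τ * (ψ (n+2) τ + ψ n τ)
        - v n τ * v (n-1) τ * (ψ n τ + ψ (n-2) τ)
        + (Complex.I/2) * v n τ * B n τ * (ψ (n+1) τ + ψ (n-1) τ))
    (hM2 : ∀ (n : ℤ) (τ : ℝ), deriv (φ n) τ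
      = ((Complex.I/2) * v n τ * v (n+1) τ * (ψ (n+2) τ + ψ n τ)) • Sb (n-1) τ
        + ((Complex.I/2) * v n τ * v (n-1) τ * (ψ (n+1) τ + ψ (n-1) τ)) • Sb (n-2) τ
        + ((Complex.I/2) * v n τ * v (n-1) τ * (ψ n τ + ψ (n-2) τ)) • Sb (n+1) τ
        + ((Complex.I/2) * v (n-1) τ * v (n-2) τ * (ψ (n-1) τ + ψ (n-3) τ)) • Sb n τ
        - ((1/4) * v n τ * B n τ * (ψ (n+1) τ + ψ (n-1) τ)) • Sb (n-1) τ
        + ((1/4) * v (n-1) τ * B (n-1) τ * (ψ n τ + ψ (n-2) τ)) • Sb n τ)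
    (hM3 : ∀ (n : ℤ) (τ : ℝ), deriv (χ n) τ
      = ((Complex.I/2) * v n τ * v (n+1) τ * (ψ (n+2) τ + ψ n τ)) • S (n-1) τ
        - ((Complex.I/2) * v n τ * v (n-1) τ * (ψ (n+1) τ + ψ (n-1) τ)) • S (n-2) τ
        + ((Complex.I/2) * v n τ * v (n-1) τ * (ψ n τ + ψ (n-2) τ)) • S (n+1) τ
        - ((Complex.I/2) * v (n-1) τ * v (n-2) τ * (ψ (n-1) τ + ψ (n-3) τ)) • S n τ
        - ((1/4) * v n τ * B n τ * (ψ (n+1) τ + ψ (n-1) τ)) • S (n-1) τ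
        - ((1/4) * v (n-1) τ * B (n-1) τ * (ψ n τ + ψ (n-2) τ)) • S n τ)
    (hne : ∀ (n : ℤ) (τ : ℝ), ψ (n+1) τ + ψ (n-1) τ ≠ 0) :
    ∀ (n : ℤ) (τ : ℝ),
      (deriv (S n) τ
        = (v n τ * v (n+1) τ) • (S (n+2) τ + S n τ)
          - (v n τ * v (n-1) τ) • (S n τ + S (n-2) τ)
          + ((Complex.I/2) * v n τ * B n τ) • (S (n+1) τ + S (n-1) τ))
      ∧ (deriv (Sb n) τ
        = (v n τ * v (n+1) τ) • (Sb (n+2) τ + Sb n τ)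
          - (v n τ * v (n-1) τ) • (Sb n τ + Sb (n-2) τ)
          - ((Complex.I/2) * v n τ * B n τ) • (Sb (n+1) τ + Sb (n-1) τ))
      ∧ (deriv (v n) τ
        = 2 * (v n τ)^2 * (v (n+1) τ - v (n-1) τ)
          + (Complex.I/2) * v n τ * v (n+1) τ
            * (pair (S (n+2) τ) (Sb n τ) - pair (S n τ) (Sb (n+2) τ))
          - (Complex.I/2) * v n τ * v (n-1) τ
            * (pair (S n τ) (Sb (n-2) τ) - pair (S (n-2) τ) (Sb n τ))
          - (1/4) * v n τ * B n τ
            * (pair (S (n+1) τ) (Sb n τ) + pair (S n τ) (Sb (n+1) τ)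
              - pair (S n τ) (Sb (n-1) τ) - pair (S (n-1) τ) (Sb n τ))) := by
  have hI : Complex.I * Complex.I = -1 := Complex.I_mul_I
  have dQ : ∀ (n : ℤ) (τ : ℝ), HasDerivAt (fun s => ψ (n+1) s + ψ (n-1) s)
      (deriv (ψ (n+1)) τ + deriv (ψ (n-1)) τ) τ := fun n τ =>
    ((hψd (n+1)) τ).hasDerivAt.add ((hψd (n-1)) τ).hasDerivAt
  have key2 : ∀ (n : ℤ) (τ : ℝ), deriv (φ (n+1)) τ - deriv (φ n) τ
      = ((Complex.I/2) * (ψ (n+1) τ + ψ (n-1) τ)) • deriv (Sb n) τ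
        + ((Complex.I/2) * (deriv (ψ (n+1)) τ + deriv (ψ (n-1)) τ)) • Sb n τ := by
    intro n τ
    have h1 := ((hφd (n+1)) τ).hasDerivAt.sub ((hφd n) τ).hasDerivAt
    have h2 := ((dQ n τ).const_mul (Complex.I/2)).smul ((hSbd n) τ).hasDerivAt
    refine h1.unique ?_
    convert h2 using 1
    funext s
    exact hL2 n s
  have key3 : ∀ (n : ℤ) (τ : ℝ), deriv (χ (n+1)) τ + deriv (χ n) τ
      = ((Complex.I/2) * (ψ (n+1) τ + ψ (n-1) τ)) • deriv (S n) τ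
        + ((Complex.I/2) * (deriv (ψ (n+1)) τ + deriv (ψ (n-1)) τ)) • S n τ := by
    intro n τ
    have h1 := ((hχd (n+1)) τ).hasDerivAt.add ((hχd n) τ).hasDerivAt
    have h2 := ((dQ n τ).const_mul (Complex.I/2)).smul ((hSd n) τ).hasDerivAt
    refine h1.unique ?_
    convert h2 using 1
    funext s
    exact hL3 n s
  have key1 : ∀ (n : ℤ) (τ : ℝ), deriv (v n) τ * (ψ (n+1) τ + ψ (n-1) τ)
      + v n τ * (deriv (ψ (n+1)) τ + deriv (ψ (n-1)) τ)
      = lam * deriv (ψ n) τ - (pair (deriv (S n) τ) (φ n τ) + pair (S n τ) (deriv (φ n) τ))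
        - (pair (deriv (χ n) τ) (Sb n τ) + pair (χ n τ) (deriv (Sb n) τ)) := by
    intro n τ
    have h1 := ((hvd n) τ).hasDerivAt.mul (dQ n τ)
    have h2 := ((((hψd n) τ).hasDerivAt.const_mul lam).sub
      (pair_hasDerivAt ((hSd n) τ).hasDerivAt ((hφd n) τ).hasDerivAt)).sub
      (pair_hasDerivAt ((hχd n) τ).hasDerivAt ((hSbd n) τ).hasDerivAt)
    refine h1.unique ?_
    convert h2 using 1
    funext s
    exact hL1 n s
  intro n τ
  have e0 : n+1+1=n+2 := by ring
  have e1 : n+1-1=n := by ring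
  have e2 : n+1+2=n+3 := by ring
  have e3 : n+1-2=n-1 := by ring
  have e4 : n+1-3=n-2 := by ring
  have e5 : n-1+1=n := by ring
  have e6 : n-1-1=n-2 := by ring
  have e7 : n-1+2=n+1 := by ring
  have e8 : n-1-2=n-3 := by ring
  have e9 : n+2+1=n+3 := by ring
  have e10 : n+2-1=n+1 := by ring
  have e11 : n-2+1=n-1 := by ring
  have e12 : n-2-1=n-3 := by ring
  have hQ := hne n τ
  have hS : deriv (S n) τ
        = (v n τ * v (n+1) τ) • (S (n+2) τ + S n τ)
          - (v n τ * v (n-1) τ) • (S n τ + S (n-2) τ)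
          + ((Complex.I/2) * v n τ * B n τ) • (S (n+1) τ + S (n-1) τ) := by
    funext k
    have h := congrFun (key3 n τ) k
    rw [hM3 (n+1) τ, hM3 n τ, hM1 (n+1) τ, hM1 (n-1) τ] at h
    simp only [e0, e1, e2, e3, e4, e5, e6, e7, e8, e9, e10, e11, e12, Pi.add_apply, Pi.sub_apply, Pi.smul_apply, smul_eq_mul] at h ⊢
    have hI2 : Complex.I/2 ≠ 0 := by simp
    apply mul_left_cancel₀ (mul_ne_zero hI2 hQ)
    linear_combination -h + (-1/4 * v n τ * B n τ * (ψ (n+1) τ + ψ (n-1) τ) * (S (n-1) τ k + S (n+1) τ k)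
      - 1/4 * v (n+1) τ * B (n+1) τ * (ψ (n+2) τ + ψ (n) τ) * S n τ k
      - 1/4 * v (n-1) τ * B (n-1) τ * (ψ (n) τ + ψ (n-2) τ) * S n τ k) * hI
  have hSb : deriv (Sb n) τ
        = (v n τ * v (n+1) τ) • (Sb (n+2) τ + Sb n τ)
          - (v n τ * v (n-1) τ) • (Sb n τ + Sb (n-2) τ)
          - ((Complex.I/2) * v n τ * B n τ) • (Sb (n+1) τ + Sb (n-1) τ) := by
    funext k
    have h := congrFun (key2 n τ) k
    rw [hM2 (n+1) τ, hM2 n τ, hM1 (n+1) τ, hM1 (n-1) τ] at h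
    simp only [e0, e1, e2, e3, e4, e5, e6, e7, e8, e9, e10, e11, e12, Pi.add_apply, Pi.sub_apply, Pi.smul_apply, smul_eq_mul] at h ⊢
    have hI2 : Complex.I/2 ≠ 0 := by simp
    apply mul_left_cancel₀ (mul_ne_zero hI2 hQ)
    linear_combination -h + (1/4 * v n τ * B n τ * (ψ (n+1) τ + ψ (n-1) τ) * (Sb (n-1) τ k + Sb (n+1) τ k)
      - 1/4 * v (n+1) τ * B (n+1) τ * (ψ (n+2) τ + ψ (n) τ) * Sb n τ k
      - 1/4 * v (n-1) τ * B (n-1) τ * (ψ (n) τ + ψ (n-2) τ) * Sb n τ k) * hI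
  refine ⟨hS, hSb, ?_⟩
  have h := key1 n τ
  rw [hS, hSb, hM3 n τ, hM2 n τ, hM1 n τ, hM1 (n+1) τ, hM1 (n-1) τ] at h
  have p1 := hL2 n τ
  have p2 := hL2 (n+1) τ
  have q1 := hL2 (n-1) τ
  have q2 := hL2 (n-2) τ
  have r1 := hL3 n τ
  have r2 := hL3 (n+1) τ
  have s1 := hL3 (n-1) τ
  have s2 := hL3 (n-2) τ
  have l0 := hL1 n τ
  have l1 := hL1 (n+1) τ
  have l2 := hL1 (n+2) τ
  have m1 := hL1 (n-1) τ
  have m2 := hL1 (n-2) τ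
  have b0 := hB n τ
  have b1 := hB (n+1) τ
  have c1 := hB (n-1) τ
  simp only [e0, e1, e2, e3, e4, e5, e6, e7, e8, e9, e10, e11, e12] at h p1 p2 q1 q2 r1 r2 s1 s2 l0 l1 l2 m1 m2 b0 b1 c1
  rw [sub_eq_iff_eq_add] at p1 p2
  rw [← eq_sub_iff_add_eq] at r1 r2
  have q1' := eq_sub_of_add_eq (sub_eq_iff_eq_add'.1 q1).symm
  have q2' := eq_sub_of_add_eq (sub_eq_iff_eq_add'.1 q2).symm
  have s1' := eq_sub_of_add_eq' s1
  have s2' := eq_sub_of_add_eq' s2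
  rw [p1] at p2
  rw [r1] at r2
  rw [p2, r2] at l2
  rw [p1, r1] at l1
  rw [q1', s1'] at m1
  rw [q2', s2', q1', s1'] at m2
  simp only [pair_add_left, pair_add_right, pair_sub_left, pair_sub_right, pair_smul_left,
    pair_smul_right] at h l2 l1 l0 m1 m2
  apply mul_right_cancel₀ hQ
  clear hL1 hL2 hL3 hM1 hM2 hM3 key1 key2 key3 hS hSb hB
  linear_combination h - v n τ * v (n+1) τ * (l2 + l0) + v n τ * v (n-1) τ * (l0 + m2)
    - (Complex.I/2) * v n τ * B n τ * (l1 + m1)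
    + (1/4 * v n τ * B n τ * (ψ (n+1) τ + ψ (n-1) τ)
        * (pair (S n τ) (Sb (n+1) τ) + pair (S (n+1) τ) (Sb n τ))) * hI
    + (Complex.I/2) * v n τ * v (n+1) τ * (ψ (n+2) τ + ψ n τ) * (b0 - b1)
    + (Complex.I/2) * v n τ * v (n-1) τ * (ψ n τ + ψ (n-2) τ) * (b0 - c1)
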